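/- (2/(e − 1))·∫₀¹ eˣ·log Γ(x) dx = C·(3 − coth(1/2)) + Re ψ(i/(2π)) − 4·∑_{n=1}^∞ (log n)/(1 + 4n²π²), where C = log(2π) + γ and ψ = Γ′/Γ is the digamma function evaluated at the purely imaginary point i/(2π). -/

import Mathlib

open Real

/-- The digamma function `ψ = Γ′/Γ`, the logarithmic derivative of the complex
Gamma function. -/
noncomputable def digamma (z : ℂ) : ℂ := deriv Complex.Gamma z / Complex.Gamma z

open Filter Topology Set MeasureTheory

theorem differentiableAt_log_Gamma {x : ℝ} (hx : 0 < x) :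
    DifferentiableAt ℝ (log ∘ Gamma) x :=
  (differentiableAt_Gamma fun m ↦ by have : (0 : ℝ) ≤ m := m.cast_nonneg; linarith).log
    (Gamma_pos_of_pos hx).ne'

theorem log_Gamma_add_one {x : ℝ} (hx : 0 < x) :
    (log ∘ Gamma) (x + 1) = (log ∘ Gamma) x + log x := by
  simp only [Function.comp_apply, Gamma_add_one hx.ne', log_mul hx.ne' (Gamma_pos_of_pos hx).ne',
    add_comm]

theorem deriv_log_Gamma_add_one {x : ℝ} (hx : 0 < x) :
    deriv (log ∘ Gamma) (x + 1) = deriv (log ∘ Gamma) x + 1 / x := by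
  rw [← deriv_comp_add_const, one_div, ← deriv_log,
    ← deriv_add (differentiableAt_log_Gamma hx) (differentiableAt_log hx.ne')]
  apply EventuallyEq.deriv_eq
  filter_upwards [eventually_gt_nhds hx] with y hy using log_Gamma_add_one hy

theorem deriv_log_Gamma_add_nat {x : ℝ} (hx : 0 < x) (n : ℕ) :
    deriv (log ∘ Gamma) (x + n) =
      deriv (log ∘ Gamma) x + ∑ k ∈ Finset.range n, 1 / (x + k) := by
  induction n with
  | zero => simp
  | succ n ih =>
    rw [Finset.sum_range_succ, Nat.cast_succ, ← add_assoc x,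
      deriv_log_Gamma_add_one (by positivity), ih]
    ring

theorem deriv_log_Gamma_nat (n : ℕ) :
    deriv (log ∘ Gamma) (n + 1) = harmonic n - eulerMascheroniConstant := by
  have h := (differentiableAt_Gamma (s := (n : ℝ) + 1) fun m ↦ by
    have : (0 : ℝ) ≤ m := m.cast_nonneg
    have : (0 : ℝ) ≤ n := n.cast_nonneg
    linarith)
  rw [Function.comp_def, deriv.log h (Gamma_pos_of_pos (by positivity)).ne', deriv_Gamma_nat,
    Gamma_nat_eq_factorial]
  field_simp
  ring

/-- The digamma series on the real unit interval. -/
theorem hasSum_deriv_log_Gamma {x : ℝ} (hx : 0 < x) (hx1 : x ≤ 1) :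
    HasSum (fun k : ℕ ↦ 1 / ((k : ℝ) + 1) - 1 / (x + 1 + k))
      (eulerMascheroniConstant + deriv (log ∘ Gamma) (x + 1)) := by
  rw [hasSum_iff_tendsto_nat_of_nonneg]
  swap
  · intro k
    rw [sub_nonneg]
    apply one_div_le_one_div_of_le <;> linarith [(k.cast_nonneg : (0 : ℝ) ≤ k)]
  have hmono : MonotoneOn (deriv (log ∘ Gamma)) (Ioi 0) :=
    convexOn_log_Gamma.monotoneOn_deriv fun y hy ↦ differentiableAt_log_Gamma hy
  have hpart (n : ℕ) : ∑ k ∈ Finset.range n, (1 / ((k : ℝ) + 1) - 1 / (x + 1 + k)) =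
      harmonic n - (deriv (log ∘ Gamma) (x + 1 + n) - deriv (log ∘ Gamma) (x + 1)) := by
    rw [deriv_log_Gamma_add_nat (by positivity), Finset.sum_sub_distrib, harmonic]
    push_cast
    simp
  have hsmall : Tendsto (fun n : ℕ ↦ deriv (log ∘ Gamma) (x + 1 + n) -
      (harmonic n - eulerMascheroniConstant)) atTop (𝓝 0) := by
    refine squeeze_zero (fun n ↦ ?_) (fun n ↦ ?_) tendsto_one_div_add_atTop_nhds_zero_nat
    · rw [sub_nonneg, ← deriv_log_Gamma_nat]
      exact hmono (by simp; positivity) (by simp; positivity) (by linarith)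
    · have h2 : deriv (log ∘ Gamma) (x + 1 + n) ≤ deriv (log ∘ Gamma) ((n + 1 : ℕ) + 1) := by
        refine hmono (by simp; positivity) (by simp; positivity) ?_
        push_cast; linarith
      rw [deriv_log_Gamma_nat, harmonic_succ] at h2
      push_cast at h2
      rw [one_div]
      linarith
  simp_rw [hpart]
  have := (tendsto_const_nhds (x := eulerMascheroniConstant + deriv (log ∘ Gamma) (x + 1))).sub
    hsmall
  rw [sub_zero] at this
  refine this.congr fun n ↦ by ring

theorem digamma_ofReal {x : ℝ} (hx : 0 < x) :
    digamma x = (deriv (log ∘ Gamma) x : ℝ) := by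
  have hne : ∀ m : ℕ, x ≠ -m := fun m ↦ by
    have : (0 : ℝ) ≤ m := m.cast_nonneg
    linarith
  have h1 : HasDerivAt (fun y : ℝ ↦ Complex.Gamma y) (deriv Complex.Gamma x) x :=
    (Complex.differentiableAt_Gamma x fun m ↦ by exact_mod_cast hne m).hasDerivAt.comp_ofReal
  have h2 : HasDerivAt (fun y : ℝ ↦ ((Gamma y : ℝ) : ℂ)) (deriv Gamma x : ℝ) x :=
    (differentiableAt_Gamma hne).hasDerivAt.ofReal_comp
  simp_rw [Complex.Gamma_ofReal] at h1
  rw [digamma, h1.unique h2, Complex.Gamma_ofReal, Function.comp_def,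
    deriv.log (differentiableAt_Gamma hne) (Gamma_pos_of_pos hx).ne']
  push_cast
  rfl

theorem norm_digamma_term_le {z : ℂ} (hz : ‖z‖ < 1 / 2) (k : ℕ) :
    ‖1 / ((k : ℂ) + 1) - 1 / (z + 1 + k)‖ ≤ 1 / ((k : ℝ) + 1) ^ 2 := by
  have hk : (0 : ℝ) < k + 1 := by positivity
  have hk1 : ‖(k : ℂ) + 1‖ = k + 1 := by
    have : ((k : ℂ) + 1) = ((k + 1 : ℝ) : ℂ) := by push_cast; rfl
    rw [this, Complex.norm_real, norm_of_nonneg hk.le]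
  have hlow : ((k : ℝ) + 1) / 2 ≤ ‖z + 1 + k‖ := by
    have h := norm_sub_norm_le ((k : ℂ) + 1) (-z)
    rw [norm_neg, hk1, show (k : ℂ) + 1 - -z = z + 1 + k by ring] at h
    linarith [(k.cast_nonneg : (0 : ℝ) ≤ k)]
  have hk0 : (k : ℂ) + 1 ≠ 0 := by rw [← norm_pos_iff, hk1]; exact hk
  have hz0 : z + 1 + k ≠ 0 := by rw [← norm_pos_iff]; linarith
  rw [div_sub_div _ _ hk0 hz0, norm_div, norm_mul, hk1,
    show 1 * (z + 1 + k) - ((k : ℂ) + 1) * 1 = z by ring]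
  calc ‖z‖ / ((k + 1) * ‖z + 1 + k‖) ≤ (1 / 2) / ((k + 1) * ((k + 1) / 2)) := by gcongr
    _ = 1 / ((k : ℝ) + 1) ^ 2 := by field_simp

theorem summable_one_div_add_one_sq : Summable fun k : ℕ ↦ 1 / ((k : ℝ) + 1) ^ 2 := by
  exact_mod_cast (summable_nat_add_iff 1).2 (Real.summable_one_div_nat_pow.2 one_lt_two)

theorem digamma_add_one_eq_tsum {z : ℂ} (hz : ‖z‖ < 1 / 2) :
    digamma (z + 1) = -eulerMascheroniConstant +
      ∑' k : ℕ, (1 / ((k : ℂ) + 1) - 1 / (z + 1 + k)) := by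
  have hne {w : ℂ} (hw : w ∈ Metric.ball (0 : ℂ) (1 / 2)) (m : ℕ) : w + 1 ≠ -m := by
    intro h
    have h1 : ((m : ℂ) + 1) = -w := by linear_combination h
    have h2 := congrArg Complex.re h1
    have h3 := Complex.abs_re_le_norm w
    rw [mem_ball_zero_iff] at hw
    simp at h2
    have := neg_abs_le w.re
    have : (0 : ℝ) ≤ m := m.cast_nonneg
    linarith [le_abs_self w.re, neg_abs_le w.re]
  have hopen : IsOpen (Metric.ball (0 : ℂ) (1 / 2)) := Metric.isOpen_ball
  have hsum : DifferentiableOn ℂ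
      (fun z : ℂ ↦ -(eulerMascheroniConstant : ℂ) +
        ∑' k : ℕ, (1 / ((k : ℂ) + 1) - 1 / (z + 1 + k))) (Metric.ball 0 (1 / 2)) := by
    refine (differentiableOn_const _).add (Complex.differentiableOn_tsum_of_summable_norm
      summable_one_div_add_one_sq (fun k ↦ ?_) hopen fun k w hw ↦
        norm_digamma_term_le (by simpa using hw) k)
    refine (differentiableOn_const _).sub ((differentiableOn_const _).div (by fun_prop) ?_)
    intro w hw h
    exact hne hw k (by linear_combination h)
  have hGamma : DifferentiableOn ℂ (fun w : ℂ ↦ Complex.Gamma (w + 1)) (Metric.ball 0 (1 / 2)) :=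
    fun w hw ↦ ((Complex.differentiableAt_Gamma _ (hne hw)).comp w
      (by fun_prop)).differentiableWithinAt
  have hdig : DifferentiableOn ℂ (fun z : ℂ ↦ digamma (z + 1)) (Metric.ball 0 (1 / 2)) := by
    refine DifferentiableOn.congr (f := fun w ↦ deriv (fun w : ℂ ↦ Complex.Gamma (w + 1)) w /
      Complex.Gamma (w + 1)) ((hGamma.deriv hopen).div hGamma
        fun w hw ↦ Complex.Gamma_ne_zero (hne hw)) fun w hw ↦ ?_
    rw [deriv_comp_add_const, digamma]
  refine (hdig.analyticOnNhd hopen).eqOn_of_preconnected_of_frequently_eq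
    (hsum.analyticOnNhd hopen) (convex_ball _ _).isPreconnected
    (Metric.mem_ball_self (by norm_num)) ?_ (by simpa using hz)
  have htend : Tendsto (fun n : ℕ ↦ ((1 / ((n : ℝ) + 1) : ℝ) : ℂ)) atTop (𝓝[≠] 0) := by
    refine tendsto_nhdsWithin_iff.2 ⟨?_, Eventually.of_forall fun n ↦ ?_⟩
    · exact_mod_cast (Complex.continuous_ofReal.tendsto 0).comp
        tendsto_one_div_add_atTop_nhds_zero_nat
    · simp only [mem_compl_iff, mem_singleton_iff, Complex.ofReal_eq_zero]
      positivity
  refine htend.frequently (Frequently.of_forall fun n ↦ ?_)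
  have hn : (0 : ℝ) < 1 / (n + 1) := by positivity
  have hn1 : 1 / ((n : ℝ) + 1) ≤ 1 := by
    rw [div_le_one (by positivity)]; linarith [(n.cast_nonneg : (0 : ℝ) ≤ n)]
  generalize 1 / ((n : ℝ) + 1) = x at hn hn1
  have h := Complex.hasSum_ofReal.2 (hasSum_deriv_log_Gamma hn hn1)
  push_cast at h
  rw [h.tsum_eq, ← Complex.ofReal_one, ← Complex.ofReal_add, digamma_ofReal (by positivity)]
  simp

theorem hasSum_re_digamma_mul_I {y : ℝ} (hy0 : y ≠ 0) (hy : |y| < 1 / 2) :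
    HasSum (fun k : ℕ ↦ y ^ 2 / (((k : ℝ) + 1) * (((k : ℝ) + 1) ^ 2 + y ^ 2)))
      ((digamma (y * Complex.I)).re + eulerMascheroniConstant) := by
  have hz : ‖(y : ℂ) * Complex.I‖ < 1 / 2 := by simpa using hy
  have hz0 : (y : ℂ) * Complex.I ≠ 0 := by simpa using hy0
  have hs : Summable fun k : ℕ ↦ (1 / ((k : ℂ) + 1) - 1 / (y * Complex.I + 1 + k)) :=
    Summable.of_norm_bounded summable_one_div_add_one_sq (norm_digamma_term_le hz)
  have h := Complex.hasSum_re hs.hasSum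
  have hrec : digamma (y * Complex.I + 1) = digamma (y * Complex.I) + (y * Complex.I)⁻¹ :=
    Complex.digamma_apply_add_one _ fun m hm ↦ by
      have := congrArg Complex.im hm
      simp at this
      exact hy0 this
  have hval : (digamma (y * Complex.I)).re + eulerMascheroniConstant =
      (∑' k : ℕ, (1 / ((k : ℂ) + 1) - 1 / (y * Complex.I + 1 + k))).re := by
    have h2 := digamma_add_one_eq_tsum hz
    rw [hrec] at h2
    have h3 := congrArg Complex.re h2
    simp only [Complex.add_re, Complex.neg_re, Complex.ofReal_re] at h3
    have h4 : ((y : ℂ) * Complex.I)⁻¹.re = 0 := by simp [Complex.inv_re]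
    linarith
  rw [hval]
  refine h.congr_fun fun k ↦ ?_
  have hk : ((k : ℝ) + 1) ≠ 0 := by positivity
  have hk2 : ((k : ℝ) + 1) ^ 2 + y ^ 2 ≠ 0 := by positivity
  have h1 : (1 / ((k : ℂ) + 1)).re = 1 / ((k : ℝ) + 1) := by
    rw [← Complex.ofReal_re (1 / ((k : ℝ) + 1))]; push_cast; rfl
  have h2 : (1 / (y * Complex.I + 1 + k)).re = ((k : ℝ) + 1) / (((k : ℝ) + 1) ^ 2 + y ^ 2) := by
    simp only [one_div, Complex.inv_re, Complex.normSq_apply]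
    simp
    congr 1 <;> ring
  simp only [Complex.sub_re, h1, h2]
  field_simp
  ring

theorem integral_sin_mul {c : ℝ} (hc : c ≠ 0) (b : ℝ) :
    ∫ x in (0:ℝ)..b, sin (c * x) = (1 - cos (c * b)) / c := by
  rw [intervalIntegral.integral_comp_mul_left _ hc, integral_sin]
  simp [div_eq_inv_mul]

theorem integral_cos_mul {c : ℝ} (hc : c ≠ 0) (b : ℝ) :
    ∫ x in (0:ℝ)..b, cos (c * x) = sin (c * b) / c := by
  rw [intervalIntegral.integral_comp_mul_left _ hc, integral_cos]
  simp [div_eq_inv_mul]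

theorem mul_sinc_eq_sin (x : ℝ) : x * sinc x = sin x := by
  rcases eq_or_ne x 0 with rfl | hx
  · simp
  · rw [sinc_of_ne_zero hx]; field_simp

theorem continuous_one_sub_cos_div (a : ℝ) : Continuous fun t ↦ (1 - cos (a * t)) / t := by
  have h : (fun t ↦ (1 - cos (a * t)) / t) =
      fun t ↦ a * (sin (a * t / 2) * sinc (a * t / 2)) := by
    funext t
    rcases eq_or_ne t 0 with rfl | ht
    · simp
    · have h1 := mul_sinc_eq_sin (a * t / 2)
      have h2 := cos_two_mul' (a * t / 2)
      rw [mul_div_cancel₀ _ two_ne_zero] at h2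
      rw [div_eq_iff ht]
      linear_combination (-2 * sin (a * t / 2)) * h1 - h2 - sin_sq_add_cos_sq (a * t / 2)
  rw [h]
  have := continuous_sinc
  fun_prop

theorem abs_cot_sub_inv_le {x : ℝ} (h0 : 0 < x) (h1 : x ≤ π / 2) :
    |cos x / sin x - 1 / x| ≤ x := by
  have hs : 0 < sin x := sin_pos_of_pos_of_lt_pi h0 (by linarith [pi_pos])
  have hup : cos x / sin x ≤ 1 / x := by
    rw [div_le_div_iff₀ hs h0]
    rcases h1.lt_or_eq with h | rfl
    · have := le_tan h0.le h
      rw [tan_eq_sin_div_cos, le_div_iff₀ (cos_pos_of_mem_Ioo ⟨by linarith, h⟩)] at this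
      linarith
    · simp
  have hlow : 1 / x - x ≤ cos x / sin x := by
    rw [le_div_iff₀ hs]
    have h2 : (1 / x - x) * sin x = (1 - x ^ 2) * (sin x / x) := by field_simp
    have h3 : sin x / x ≤ 1 := (div_le_one h0).2 (sin_le h0.le)
    have h4 : 0 < sin x / x := by positivity
    have h5 := one_sub_sq_div_two_le_cos (x := x)
    have h6 := cos_nonneg_of_mem_Icc (x := x) ⟨by linarith, h1⟩
    rw [h2]
    rcases le_total (1 - x ^ 2) 0 with h | h
    · nlinarith
    · nlinarith [sq_nonneg x]
  rw [abs_le]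
  constructor <;> linarith

theorem intervalIntegrable_cot_sub_inv :
    IntervalIntegrable (fun x ↦ cos x / sin x - 1 / x) volume 0 (π / 2) := by
  refine (continuous_id.intervalIntegrable 0 (π / 2)).mono_fun'
    (by fun_prop) ?_
  rw [uIoc_of_le (by positivity)]
  filter_upwards [ae_restrict_mem measurableSet_Ioc] with x hx
  exact abs_cot_sub_inv_le hx.1 hx.2

theorem integral_cot_sub_inv :
    ∫ x in (0:ℝ)..(π / 2), (cos x / sin x - 1 / x) = log (2 / π) := by
  have hpos : ∀ x ∈ Icc (0 : ℝ) (π / 2), sinc x ≠ 0 := fun x hx h ↦ by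
    rcases hx.1.eq_or_lt with rfl | h0
    · simp at h
    · have := mul_sinc_eq_sin x
      rw [h, mul_zero] at this
      exact (sin_pos_of_pos_of_lt_pi h0 (by linarith [pi_pos, hx.2])).ne this
  rw [intervalIntegral.integral_eq_sub_of_hasDerivAt_of_le (f := fun x ↦ log (sinc x))
    (by positivity) (continuous_sinc.continuousOn.log hpos) ?_ intervalIntegrable_cot_sub_inv]
  · rw [sinc_of_ne_zero (by positivity)]
    simp
  · intro x hx
    have hs : sin x ≠ 0 := (sin_pos_of_pos_of_lt_pi hx.1 (by linarith [pi_pos, hx.2])).ne'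
    have h := ((hasDerivAt_sin x).log hs).sub (hasDerivAt_log hx.1.ne')
    rw [← one_div] at h
    refine h.congr_of_eventuallyEq ?_
    filter_upwards [Ioo_mem_nhds hx.1 hx.2] with y hy
    have hs : sin y ≠ 0 := (sin_pos_of_pos_of_lt_pi hy.1 (by linarith [pi_pos, hy.2])).ne'
    rw [sinc_of_ne_zero hy.1.ne', log_div hs hy.1.ne']
    rfl

/-- Riemann–Lebesgue for the trigonometric functions on an interval. -/
theorem tendsto_integral_cos_sin_mul {f : ℝ → ℝ} {a b c : ℝ} (hab : a ≤ b) (hc : 0 < c)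
    (hf : IntervalIntegrable f volume a b) :
    Tendsto (fun n : ℕ ↦ ∫ x in a..b, cos (c * n * x) * f x) atTop (𝓝 0) ∧
    Tendsto (fun n : ℕ ↦ ∫ x in a..b, sin (c * n * x) * f x) atTop (𝓝 0) := by
  have hw : Tendsto (fun n : ℕ ↦ -(c * n / (2 * π))) atTop (cocompact ℝ) := by
    refine Tendsto.mono_right ?_ atBot_le_cocompact
    refine tendsto_neg_atTop_atBot.comp ?_
    exact (tendsto_natCast_atTop_atTop.const_mul_atTop hc).atTop_div_const (by positivity)
  have h := (Real.tendsto_integral_exp_smul_cocompact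
    ((Ioc a b).indicator fun x ↦ (f x : ℂ))).comp hw
  have heq (n : ℕ) : ∫ v : ℝ, Real.fourierChar (-(v * -(c * n / (2 * π)))) •
      (Ioc a b).indicator (fun x ↦ (f x : ℂ)) v =
      ∫ x in a..b, Complex.exp ((c * n * x : ℝ) * Complex.I) * (f x : ℂ) := by
    rw [intervalIntegral.integral_of_le hab, ← integral_indicator measurableSet_Ioc]
    congr 1
    funext v
    by_cases hv : v ∈ Ioc a b
    · rw [indicator_of_mem hv, indicator_of_mem hv, Circle.smul_def, Real.fourierChar_apply,
        smul_eq_mul]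
      congr 4
      field_simp
    · rw [indicator_of_notMem hv, indicator_of_notMem hv, smul_zero]
  have hInt (n : ℕ) : IntervalIntegrable
      (fun x ↦ Complex.exp ((c * n * x : ℝ) * Complex.I) * (f x : ℂ)) volume a b :=
    IntervalIntegrable.continuousOn_mul ⟨hf.1.ofReal, hf.2.ofReal⟩ (by fun_prop)
  simp_rw [Function.comp_def, heq] at h
  constructor
  · refine ((Complex.continuous_re.tendsto 0).comp h).congr fun n ↦ ?_
    have := Complex.reCLM.intervalIntegral_comp_comm (hInt n)
    simp only [Complex.reCLM_apply] at this
    rw [Function.comp_apply, ← this]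
    congr 1
    funext x
    rw [Complex.re_mul_ofReal, Complex.exp_ofReal_mul_I_re]
  · refine ((Complex.continuous_im.tendsto 0).comp h).congr fun n ↦ ?_
    have := Complex.imCLM.intervalIntegral_comp_comm (hInt n)
    simp only [Complex.imCLM_apply] at this
    rw [Function.comp_apply, ← this]
    congr 1
    funext x
    rw [Complex.im_mul_ofReal, Complex.exp_ofReal_mul_I_im]

theorem intervalIntegrable_one_sub_cos_mul_cot (a : ℝ) :
    IntervalIntegrable (fun x ↦ (1 - cos (a * x)) * (cos x / sin x)) volume 0 (π / 2) := by
  have h := (intervalIntegrable_cot_sub_inv.continuousOn_mul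
    (g := fun x ↦ 1 - cos (a * x)) (by fun_prop)).add
    ((continuous_one_sub_cos_div a).intervalIntegrable 0 (π / 2))
  refine h.congr fun x _ ↦ ?_
  ring

theorem intervalIntegrable_sin_mul_cot (a : ℝ) :
    IntervalIntegrable (fun x ↦ sin (a * x) * (cos x / sin x)) volume 0 (π / 2) := by
  have hsinc : Continuous fun x ↦ a * sinc (a * x) :=
    continuous_const.mul (continuous_sinc.comp (continuous_const.mul continuous_id))
  have h := (intervalIntegrable_cot_sub_inv.continuousOn_mul
    (g := fun x ↦ sin (a * x)) (by fun_prop)).add (hsinc.intervalIntegrable 0 (π / 2))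
  refine h.congr fun x hx ↦ ?_
  rw [uIoc_of_le (by positivity)] at hx
  have hx0 := hx.1.ne'
  have hs : a * sinc (a * x) = sin (a * x) / x := by
    rw [← mul_sinc_eq_sin]
    field_simp
  simp only [hs]
  ring

theorem cos_natCast_mul_two_pi_add_pi (n : ℕ) : cos ((4 * n + 2) * (π / 2)) = -1 := by
  rw [show ((4 : ℝ) * n + 2) * (π / 2) = n * (2 * π) + π by ring, cos_nat_mul_two_pi_add_pi]

theorem integral_one_sub_cos_mul_cot (n : ℕ) :
    ∫ x in (0:ℝ)..(π / 2), (1 - cos (4 * n * x)) * (cos x / sin x) =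
      2 * ∑ i ∈ Finset.range n, 1 / (2 * (i : ℝ) + 1) := by
  induction n with
  | zero => simp
  | succ n ih =>
    have hstep : (∫ x in (0:ℝ)..(π / 2), (1 - cos (4 * (n + 1 : ℕ) * x)) * (cos x / sin x)) -
        ∫ x in (0:ℝ)..(π / 2), (1 - cos (4 * n * x)) * (cos x / sin x) =
        ∫ x in (0:ℝ)..(π / 2), (2 * sin ((4 * n + 2) * x) + (sin ((4 * n + 4) * x) +
          sin (4 * n * x))) := by
      rw [← intervalIntegral.integral_sub (intervalIntegrable_one_sub_cos_mul_cot _)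
        (intervalIntegrable_one_sub_cos_mul_cot _)]
      refine intervalIntegral.integral_congr_ae (ae_of_all _ fun x hx ↦ ?_)
      rw [uIoc_of_le (by positivity)] at hx
      have hs : sin x ≠ 0 := (sin_pos_of_pos_of_lt_pi hx.1 (by linarith [pi_pos, hx.2])).ne'
      have e1 : ((4 : ℝ) * (n + 1 : ℕ)) * x = (4 * n + 2) * x + 2 * x := by push_cast; ring
      have e2 : ((4 : ℝ) * n) * x = (4 * n + 2) * x - 2 * x := by ring
      have e3 : ((4 : ℝ) * n + 4) * x = (4 * n + 2) * x + 2 * x := by ring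
      rw [e1, e2, e3, cos_add, cos_sub, sin_add, sin_sub, sin_two_mul, cos_two_mul]
      field_simp
      ring
    have hz : ∫ x in (0:ℝ)..(π / 2), sin (4 * n * x) = 0 := by
      rcases Nat.eq_zero_or_pos n with rfl | hn
      · simp
      · rw [integral_sin_mul (by positivity),
          show (4 : ℝ) * n * (π / 2) = n * (2 * π) by ring, cos_nat_mul_two_pi]
        simp
    have hz' : ∫ x in (0:ℝ)..(π / 2), sin ((4 * n + 4) * x) = 0 := by
      rw [integral_sin_mul (by positivity),
        show ((4 : ℝ) * n + 4) * (π / 2) = (n + 1 : ℕ) * (2 * π) by push_cast; ring,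
        cos_nat_mul_two_pi]
      simp
    have hi (c : ℝ) : IntervalIntegrable (fun x ↦ sin (c * x)) volume 0 (π / 2) :=
      Continuous.intervalIntegrable (by fun_prop) _ _
    rw [intervalIntegral.integral_add ((hi _).const_mul 2) ((hi _).add (hi _)),
      intervalIntegral.integral_add (hi _) (hi _), hz, hz', intervalIntegral.integral_const_mul,
      integral_sin_mul (by positivity), cos_natCast_mul_two_pi_add_pi] at hstep
    rw [Finset.sum_range_succ, mul_add, ← ih, ← sub_eq_iff_eq_add', hstep]
    field_simp
    ring

theorem integral_sin_mul_cot {n : ℕ} (hn : n ≠ 0) :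
    ∫ x in (0:ℝ)..(π / 2), sin (4 * n * x) * (cos x / sin x) = π / 2 := by
  have hstep (n : ℕ) : (∫ x in (0:ℝ)..(π / 2), sin (4 * (n + 1 : ℕ) * x) * (cos x / sin x)) -
      ∫ x in (0:ℝ)..(π / 2), sin (4 * n * x) * (cos x / sin x) =
      ∫ x in (0:ℝ)..(π / 2), cos (4 * n * x) := by
    have hi (c : ℝ) : IntervalIntegrable (fun x ↦ cos (c * x)) volume 0 (π / 2) :=
      Continuous.intervalIntegrable (by fun_prop) _ _
    trans ∫ x in (0:ℝ)..(π / 2), (2 * cos ((4 * n + 2) * x) + (cos ((4 * n + 4) * x) +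
          cos (4 * n * x)))
    · rw [← intervalIntegral.integral_sub (intervalIntegrable_sin_mul_cot _)
        (intervalIntegrable_sin_mul_cot _)]
      refine intervalIntegral.integral_congr_ae (ae_of_all _ fun x hx ↦ ?_)
      rw [uIoc_of_le (by positivity)] at hx
      have hs : sin x ≠ 0 := (sin_pos_of_pos_of_lt_pi hx.1 (by linarith [pi_pos, hx.2])).ne'
      have e1 : ((4 : ℝ) * (n + 1 : ℕ)) * x = (4 * n + 2) * x + 2 * x := by push_cast; ring
      have e2 : ((4 : ℝ) * n) * x = (4 * n + 2) * x - 2 * x := by ring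
      have e3 : ((4 : ℝ) * n + 4) * x = (4 * n + 2) * x + 2 * x := by ring
      rw [e1, e2, e3, sin_add, cos_sub, cos_add, sin_sub, sin_two_mul, cos_two_mul]
      field_simp
      ring
    · rw [intervalIntegral.integral_add ((hi _).const_mul 2) ((hi _).add (hi _)),
        intervalIntegral.integral_add (hi _) (hi _), intervalIntegral.integral_const_mul,
        integral_cos_mul (c := 4 * n + 2) (by positivity),
        integral_cos_mul (c := 4 * n + 4) (by positivity),
        show ((4 : ℝ) * n + 2) * (π / 2) = (2 * n + 1 : ℕ) * π by push_cast; ring,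
        show ((4 : ℝ) * n + 4) * (π / 2) = (2 * n + 2 : ℕ) * π by push_cast; ring,
        sin_nat_mul_pi, sin_nat_mul_pi]
      simp
  induction n with
  | zero => exact absurd rfl hn
  | succ n ih =>
    rcases Nat.eq_zero_or_pos n with rfl | hn
    · have := hstep 0
      simp only [Nat.cast_zero, mul_zero, zero_mul, sin_zero, cos_zero,
        intervalIntegral.integral_zero, sub_zero, intervalIntegral.integral_const] at this
      rw [this]
      simp
    · have := hstep n
      rw [ih hn.ne', integral_cos_mul (by positivity),
        show (4 : ℝ) * n * (π / 2) = (2 * n : ℕ) * π by push_cast; ring, sin_nat_mul_pi,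
        zero_div] at this
      linarith

theorem two_mul_sum_odd (n : ℕ) :
    2 * ∑ i ∈ Finset.range n, 1 / (2 * (i : ℝ) + 1) = 2 * harmonic (2 * n) - harmonic n := by
  induction n with
  | zero => simp
  | succ n ih =>
    rw [Finset.sum_range_succ, mul_add, ih, show 2 * (n + 1) = 2 * n + 1 + 1 by ring,
      harmonic_succ, harmonic_succ, harmonic_succ]
    push_cast
    field_simp
    ring

/-- The cosine integral: `∫₀^{2πn} (1 - cos t)/t dt - log (2πn) → γ`. -/
theorem tendsto_integral_one_sub_cos_div :
    Tendsto (fun n : ℕ ↦ (∫ x in (0:ℝ)..(2 * π * n), (1 - cos x) / x) - log (2 * π * n)) atTop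
      (𝓝 eulerMascheroniConstant) := by
  have hRL := (tendsto_integral_cos_sin_mul (c := 4) (by positivity : (0 : ℝ) ≤ π / 2)
    (by norm_num) intervalIntegrable_cot_sub_inv).1
  have hH := tendsto_harmonic_sub_log
  have hH2 : Tendsto (fun n : ℕ ↦ (harmonic (2 * n) : ℝ) - log ((2 * n : ℕ) : ℝ)) atTop
      (𝓝 eulerMascheroniConstant) :=
    hH.comp (tendsto_id.const_mul_atTop' two_pos)
  have h := ((hH2.const_mul 2).sub hH).add hRL
  rw [add_zero, show 2 * eulerMascheroniConstant - eulerMascheroniConstant =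
    eulerMascheroniConstant by ring] at h
  refine h.congr' ?_
  filter_upwards [eventually_gt_atTop 0] with n hn
  have hn' : (0 : ℝ) < n := by exact_mod_cast hn
  have hscale : ∫ x in (0:ℝ)..(2 * π * n), (1 - cos x) / x =
      ∫ x in (0:ℝ)..(π / 2), (1 - cos (4 * n * x)) / x := by
    have h4 : (4 * n : ℝ) ≠ 0 := by positivity
    have := intervalIntegral.integral_comp_mul_left (a := 0) (b := π / 2)
      (fun x ↦ (1 - cos x) / x) h4
    rw [mul_zero, show (4 * n : ℝ) * (π / 2) = 2 * π * n by ring, smul_eq_mul,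
      eq_inv_mul_iff_mul_eq₀ h4, ← intervalIntegral.integral_const_mul] at this
    rw [← this]
    congr 1
    funext x
    rcases eq_or_ne x 0 with rfl | hx
    · simp
    · field_simp
  have hsplit : (∫ x in (0:ℝ)..(π / 2), (1 - cos (4 * n * x)) * (cos x / sin x)) -
      ((∫ x in (0:ℝ)..(π / 2), (cos x / sin x - 1 / x)) -
      ∫ x in (0:ℝ)..(π / 2), cos (4 * n * x) * (cos x / sin x - 1 / x)) =
      ∫ x in (0:ℝ)..(π / 2), (1 - cos (4 * n * x)) / x := by
    rw [← intervalIntegral.integral_sub intervalIntegrable_cot_sub_inv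
      (intervalIntegrable_cot_sub_inv.continuousOn_mul (by fun_prop)),
      ← intervalIntegral.integral_sub (intervalIntegrable_one_sub_cos_mul_cot _)
      (intervalIntegrable_cot_sub_inv.sub
        (intervalIntegrable_cot_sub_inv.continuousOn_mul (by fun_prop)))]
    congr 1
    funext x
    ring
  rw [hscale, ← hsplit, integral_one_sub_cos_mul_cot, two_mul_sum_odd, integral_cot_sub_inv,
    log_div two_ne_zero pi_ne_zero, log_mul (by positivity) hn'.ne',
    log_mul two_ne_zero pi_ne_zero]
  push_cast
  rw [log_mul two_ne_zero hn'.ne']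
  ring

/-- The Dirichlet integral along full periods. -/
theorem tendsto_integral_sinc :
    Tendsto (fun n : ℕ ↦ ∫ x in (0:ℝ)..(2 * π * n), sinc x) atTop (𝓝 (π / 2)) := by
  have hRL := (tendsto_integral_cos_sin_mul (c := 4) (by positivity : (0 : ℝ) ≤ π / 2)
    (by norm_num) intervalIntegrable_cot_sub_inv).2
  have h := (tendsto_const_nhds (x := π / 2)).sub hRL
  rw [sub_zero] at h
  refine h.congr' ?_
  filter_upwards [eventually_ne_atTop 0] with n hn
  have hn' : (n : ℝ) ≠ 0 := by exact_mod_cast hn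
  nth_rewrite 1 [← integral_sin_mul_cot hn]
  rw [← intervalIntegral.integral_sub (intervalIntegrable_sin_mul_cot _)
    (intervalIntegrable_cot_sub_inv.continuousOn_mul (by fun_prop))]
  have h4 : (4 * n : ℝ) ≠ 0 := by positivity
  have := intervalIntegral.integral_comp_mul_left (a := 0) (b := π / 2) sinc h4
  rw [mul_zero, show (4 * n : ℝ) * (π / 2) = 2 * π * n by ring, smul_eq_mul,
    eq_inv_mul_iff_mul_eq₀ h4, ← intervalIntegral.integral_const_mul] at this
  rw [← this]
  refine intervalIntegral.integral_congr_ae (ae_of_all _ fun x hx ↦ ?_)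
  rw [uIoc_of_le (by positivity)] at hx
  have hx0 := hx.1.ne'
  rw [sinc_of_ne_zero (by positivity)]
  field_simp
  ring

theorem continuousOn_log_Gamma_add_one :
    ContinuousOn (fun x ↦ log (Gamma (x + 1))) (Icc 0 1) := fun x hx ↦
  ((differentiableAt_log_Gamma (by linarith [hx.1] : 0 < x + 1)).continuousAt.comp
    (f := fun x : ℝ ↦ x + 1) (by fun_prop)).continuousWithinAt

theorem intervalIntegrable_log_Gamma :
    IntervalIntegrable (fun x ↦ log (Gamma x)) volume 0 1 := by
  have h : IntervalIntegrable (fun x ↦ log (Gamma (x + 1))) volume 0 1 :=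
    ContinuousOn.intervalIntegrable (by
      rw [uIcc_of_le zero_le_one]; exact continuousOn_log_Gamma_add_one)
  refine (h.sub intervalIntegral.intervalIntegrable_log').congr fun x hx ↦ ?_
  rw [uIoc_of_le zero_le_one] at hx
  have := log_Gamma_add_one hx.1
  simp only [Function.comp_apply] at this
  simp only [this]
  ring

theorem abs_log_Gamma_sub_logGammaSeq_le {x : ℝ} (h0 : 0 < x) (h1 : x ≤ 1) {n : ℕ} (hn : n ≠ 0) :
    |BohrMollerup.logGammaSeq x n - log (Gamma x)| ≤ log (n + 1) - log n := by
  have hle := BohrMollerup.le_logGammaSeq convexOn_log_Gamma log_Gamma_add_one h0 h1 n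
  have hge := BohrMollerup.ge_logGammaSeq convexOn_log_Gamma log_Gamma_add_one h0 hn
  simp only [Function.comp_apply, Gamma_one, log_one, zero_add] at hle hge
  have hlog : 0 ≤ log ((n : ℝ) + 1) - log n := by
    have : (0 : ℝ) < n := by positivity
    linarith [log_le_log this (by linarith : (n : ℝ) ≤ n + 1)]
  rw [abs_le]
  constructor <;> nlinarith

theorem intervalIntegrable_log_add (m : ℝ) :
    IntervalIntegrable (fun x : ℝ ↦ log (x + m)) volume 0 1 := by
  have := (intervalIntegral.intervalIntegrable_log' (a := 0 + m) (b := 1 + m)).comp_add_right m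
  simpa using this

theorem intervalIntegrable_logGammaSeq (n : ℕ) :
    IntervalIntegrable (fun x ↦ BohrMollerup.logGammaSeq x n) volume 0 1 := by
  unfold BohrMollerup.logGammaSeq
  refine IntervalIntegrable.sub (Continuous.intervalIntegrable (by fun_prop) _ _) ?_
  have := IntervalIntegrable.sum (μ := volume) (a := 0) (b := 1) (Finset.range (n + 1))
    (f := fun m x ↦ log (x + (m : ℝ))) fun m _ ↦ intervalIntegrable_log_add m
  exact this.congr fun x _ ↦ by simp

theorem tendsto_integral_logGammaSeq_mul {g : ℝ → ℝ} (hg : Continuous g) (hg1 : ∀ x, |g x| ≤ 1) :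
    Tendsto (fun n : ℕ ↦ ∫ x in (0:ℝ)..1, BohrMollerup.logGammaSeq x n * g x) atTop
      (𝓝 (∫ x in (0:ℝ)..1, log (Gamma x) * g x)) := by
  rw [tendsto_iff_norm_sub_tendsto_zero]
  refine squeeze_zero' (Eventually.of_forall fun _ ↦ norm_nonneg _) ?_
    tendsto_log_nat_add_one_sub_log
  filter_upwards [eventually_ne_atTop 0] with n hn
  rw [← intervalIntegral.integral_sub
    ((intervalIntegrable_logGammaSeq n).mul_continuousOn hg.continuousOn)
    (intervalIntegrable_log_Gamma.mul_continuousOn hg.continuousOn)]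
  refine (intervalIntegral.norm_integral_le_of_norm_le_const (C := log (n + 1) - log n)
    fun x hx ↦ ?_).trans (by simp)
  rw [uIoc_of_le zero_le_one] at hx
  rw [← sub_mul, norm_mul, norm_eq_abs, norm_eq_abs]
  have h1 := abs_log_Gamma_sub_logGammaSeq_le hx.1 hx.2 hn
  exact (mul_le_of_le_one_right (abs_nonneg _) (hg1 x)).trans h1

theorem integral_logGammaSeq_mul {g : ℝ → ℝ} (hg : Continuous g) (hper : Function.Periodic g 1)
    (h0 : ∫ x in (0:ℝ)..1, g x = 0) (n : ℕ) :
    ∫ x in (0:ℝ)..1, BohrMollerup.logGammaSeq x n * g x =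
      log n * (∫ x in (0:ℝ)..1, x * g x) - ∫ t in (0:ℝ)..(n + 1 : ℕ), log t * g t := by
  have hsum : ∫ t in (0:ℝ)..(n + 1 : ℕ), log t * g t =
      ∑ m ∈ Finset.range (n + 1), ∫ x in (0:ℝ)..1, log (x + m) * g x := by
    have := intervalIntegral.sum_integral_adjacent_intervals (μ := volume)
      (f := fun t ↦ log t * g t) (a := fun k : ℕ ↦ (k : ℝ)) (n := n + 1) fun k _ ↦
        intervalIntegral.intervalIntegrable_log'.mul_continuousOn hg.continuousOn
    rw [Nat.cast_zero] at this
    rw [← this]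
    refine Finset.sum_congr rfl fun m _ ↦ ?_
    have h := intervalIntegral.integral_comp_add_right (a := 0) (b := 1)
      (fun t ↦ log t * g t) (m : ℝ)
    rw [zero_add, add_comm (1 : ℝ)] at h
    rw [Nat.cast_succ, ← h]
    congr 1
    funext x
    have : g (x + m) = g x := by simpa using hper.nat_mul m x
    rw [this]
  have hi (m : ℕ) : IntervalIntegrable (fun x : ℝ ↦ log (x + m) * g x) volume 0 1 :=
    (intervalIntegrable_log_add m).mul_continuousOn hg.continuousOn
  rw [hsum, ← intervalIntegral.integral_finsetSum fun m _ ↦ hi m,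
    ← intervalIntegral.integral_const_mul]
  have hz : ∫ x in (0:ℝ)..1, log n * (x * g x) =
      (∫ x in (0:ℝ)..1, log n * (x * g x)) + ∫ x in (0:ℝ)..1, log (n.factorial) * g x := by
    rw [intervalIntegral.integral_const_mul (log (n.factorial)), h0, mul_zero, add_zero]
  rw [hz,
    ← intervalIntegral.integral_add (Continuous.intervalIntegrable (by fun_prop) _ _)
      (Continuous.intervalIntegrable (by fun_prop) _ _),
    ← intervalIntegral.integral_sub (Continuous.intervalIntegrable (by fun_prop) _ _)]
  · congr 1
    funext x
    rw [BohrMollerup.logGammaSeq, ← Finset.sum_mul]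
    ring
  · have := IntervalIntegrable.sum (μ := volume) (a := 0) (b := 1) (Finset.range (n + 1))
      (f := fun m x ↦ log (x + (m : ℝ)) * g x) fun m _ ↦ hi m
    exact this.congr fun x _ ↦ by simp

theorem tendsto_sub_integral_log_mul {g : ℝ → ℝ} (hg : Continuous g)
    (hper : Function.Periodic g 1) (h0 : ∫ x in (0:ℝ)..1, g x = 0) (hg1 : ∀ x, |g x| ≤ 1) :
    Tendsto (fun n : ℕ ↦ log n * (∫ x in (0:ℝ)..1, x * g x) -
      ∫ t in (0:ℝ)..(n + 1 : ℕ), log t * g t) atTop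
      (𝓝 (∫ x in (0:ℝ)..1, log (Gamma x) * g x)) :=
  (tendsto_integral_logGammaSeq_mul hg hg1).congr (integral_logGammaSeq_mul hg hper h0)

theorem integral_log_mul_sin {a b : ℝ} (ha : a ≠ 0) (hb : 0 ≤ b) (hab : cos (a * b) = 1) :
    ∫ t in (0:ℝ)..b, log t * sin (a * t) =
      -(1 / a) * ∫ u in (0:ℝ)..(a * b), (1 - cos u) / u := by
  have hF : (fun t ↦ log t * (1 - cos (a * t))) =
      fun t ↦ t * log t * ((1 - cos (a * t)) / t) := by
    funext t
    rcases eq_or_ne t 0 with rfl | ht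
    · simp
    · field_simp
  have hInt : IntervalIntegrable (fun t ↦ log t * (a * sin (a * t))) volume 0 b :=
    intervalIntegral.intervalIntegrable_log'.mul_continuousOn (by fun_prop)
  have hk := (continuous_one_sub_cos_div a).intervalIntegrable (μ := volume) 0 b
  have hFTC := intervalIntegral.integral_eq_sub_of_hasDerivAt_of_le
    (f := fun t ↦ log t * (1 - cos (a * t)))
    (f' := fun t ↦ (1 - cos (a * t)) / t + log t * (a * sin (a * t))) hb
    (by
      rw [hF]
      exact (continuous_mul_log.mul (continuous_one_sub_cos_div a)).continuousOn)
    (fun x hx ↦ by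
      have h1 : HasDerivAt (fun t ↦ a * t) a x := by
        simpa using (hasDerivAt_id x).const_mul a
      have := (hasDerivAt_log hx.1.ne').mul (h1.cos.const_sub 1)
      exact this.congr_deriv (by ring))
    (hk.add hInt)
  rw [intervalIntegral.integral_add hk hInt, hab] at hFTC
  have h1 : ∫ t in (0:ℝ)..b, log t * (a * sin (a * t)) =
      a * ∫ t in (0:ℝ)..b, log t * sin (a * t) := by
    rw [← intervalIntegral.integral_const_mul]
    congr 1
    funext t
    ring
  have h2 : ∫ u in (0:ℝ)..(a * b), (1 - cos u) / u = ∫ t in (0:ℝ)..b, (1 - cos (a * t)) / t := by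
    have := intervalIntegral.integral_comp_mul_left (a := 0) (b := b)
      (fun x ↦ (1 - cos x) / x) ha
    rw [mul_zero, smul_eq_mul, eq_inv_mul_iff_mul_eq₀ ha,
      ← intervalIntegral.integral_const_mul] at this
    rw [← this]
    congr 1
    funext x
    rcases eq_or_ne x 0 with rfl | hx
    · simp
    · field_simp
  rw [h1] at hFTC
  simp only [sub_self, mul_zero, log_zero, zero_mul] at hFTC
  rw [h2]
  field_simp
  linarith

theorem integral_log_mul_cos {a b : ℝ} (ha : a ≠ 0) (hb : 0 ≤ b) (hab : sin (a * b) = 0) :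
    ∫ t in (0:ℝ)..b, log t * cos (a * t) = -(1 / a) * ∫ u in (0:ℝ)..(a * b), sinc u := by
  have hF : (fun t ↦ log t * sin (a * t)) = fun t ↦ t * log t * (a * sinc (a * t)) := by
    funext t
    rw [← mul_sinc_eq_sin]
    ring
  have hsinc : Continuous fun t ↦ a * sinc (a * t) :=
    continuous_const.mul (continuous_sinc.comp (continuous_const.mul continuous_id))
  have hInt : IntervalIntegrable (fun t ↦ log t * (a * cos (a * t))) volume 0 b :=
    intervalIntegral.intervalIntegrable_log'.mul_continuousOn (by fun_prop)
  have hk := hsinc.intervalIntegrable (μ := volume) 0 b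
  have hFTC := intervalIntegral.integral_eq_sub_of_hasDerivAt_of_le
    (f := fun t ↦ log t * sin (a * t))
    (f' := fun t ↦ a * sinc (a * t) + log t * (a * cos (a * t))) hb
    (by
      rw [hF]
      exact (continuous_mul_log.mul hsinc).continuousOn)
    (fun x hx ↦ by
      have h1 : HasDerivAt (fun t ↦ a * t) a x := by
        simpa using (hasDerivAt_id x).const_mul a
      have := (hasDerivAt_log hx.1.ne').mul h1.sin
      have hx0 := hx.1.ne'
      refine this.congr_deriv ?_
      rw [← mul_sinc_eq_sin]
      field_simp)
    (hk.add hInt)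
  rw [intervalIntegral.integral_add hk hInt, hab] at hFTC
  have h1 : ∫ t in (0:ℝ)..b, log t * (a * cos (a * t)) =
      a * ∫ t in (0:ℝ)..b, log t * cos (a * t) := by
    rw [← intervalIntegral.integral_const_mul]
    congr 1
    funext t
    ring
  have h2 : ∫ u in (0:ℝ)..(a * b), sinc u = ∫ t in (0:ℝ)..b, a * sinc (a * t) := by
    have := intervalIntegral.integral_comp_mul_left (a := 0) (b := b) sinc ha
    rw [mul_zero, smul_eq_mul, eq_inv_mul_iff_mul_eq₀ ha,
      ← intervalIntegral.integral_const_mul] at this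
    exact this.symm
  rw [h1] at hFTC
  simp only [mul_zero, log_zero, zero_mul, sub_self] at hFTC
  rw [h2]
  field_simp
  linarith

theorem integral_id_mul_sin {a : ℝ} (ha : a ≠ 0) (hs : sin a = 0) (hc : cos a = 1) :
    ∫ x in (0:ℝ)..1, x * sin (a * x) = -(1 / a) := by
  rw [intervalIntegral.integral_eq_sub_of_hasDerivAt
    (f := fun x ↦ sin (a * x) / a ^ 2 - x * cos (a * x) / a) (fun x _ ↦ ?_)
    (Continuous.intervalIntegrable (by fun_prop) _ _)]
  · simp [hs, hc]
  · have h1 : HasDerivAt (fun t ↦ a * t) a x := by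
      simpa using (hasDerivAt_id x).const_mul a
    refine ((h1.sin.div_const (a ^ 2)).sub
      (((hasDerivAt_id x).mul h1.cos).div_const a)).congr_deriv ?_
    rw [id]
    field_simp
    ring

theorem integral_id_mul_cos {a : ℝ} (ha : a ≠ 0) (hs : sin a = 0) (hc : cos a = 1) :
    ∫ x in (0:ℝ)..1, x * cos (a * x) = 0 := by
  rw [intervalIntegral.integral_eq_sub_of_hasDerivAt
    (f := fun x ↦ cos (a * x) / a ^ 2 + x * sin (a * x) / a) (fun x _ ↦ ?_)
    (Continuous.intervalIntegrable (by fun_prop) _ _)]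
  · simp [hs, hc]
  · have h1 : HasDerivAt (fun t ↦ a * t) a x := by
      simpa using (hasDerivAt_id x).const_mul a
    refine ((h1.cos.div_const (a ^ 2)).add
      (((hasDerivAt_id x).mul h1.sin).div_const a)).congr_deriv ?_
    rw [id]
    field_simp
    ring

theorem tendsto_mul_add_one_atTop {n : ℕ} (hn : 0 < n) :
    Tendsto (fun N : ℕ ↦ n * (N + 1)) atTop atTop :=
  (tendsto_add_atTop_nat 1).const_mul_atTop' hn

/-- The sine Fourier coefficients of `log Γ` on the unit interval. -/
theorem integral_log_Gamma_mul_sin {n : ℕ} (hn : 0 < n) :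
    ∫ x in (0:ℝ)..1, log (Gamma x) * sin (2 * π * n * x) =
      (eulerMascheroniConstant + log (2 * π * n)) / (2 * π * n) := by
  have hn' : (0 : ℝ) < n := by exact_mod_cast hn
  have ha : 2 * π * n ≠ 0 := by positivity
  have hs : sin (2 * π * n) = 0 := by
    rw [show 2 * π * n = (2 * n : ℕ) * π by push_cast; ring, sin_nat_mul_pi]
  have hc : cos (2 * π * n) = 1 := by rw [mul_comm, cos_nat_mul_two_pi]
  have hlim := tendsto_sub_integral_log_mul (g := fun x ↦ sin (2 * π * n * x)) (by fun_prop)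
    (fun x ↦ by simp only [mul_add, mul_one]; rw [sin_add, hs, hc]; ring)
    (by rw [integral_sin_mul ha, mul_one, hc]; simp) fun x ↦ abs_sin_le_one _
  refine tendsto_nhds_unique hlim ?_
  have h1 := tendsto_integral_one_sub_cos_div.comp (tendsto_mul_add_one_atTop hn)
  have h2 := ((h1.add_const (log (2 * π * n))).add tendsto_log_nat_add_one_sub_log).div_const
    (2 * π * n)
  rw [add_zero] at h2
  refine h2.congr fun N ↦ ?_
  have hN : (0 : ℝ) < N + 1 := by positivity
  rw [integral_id_mul_sin ha hs hc, integral_log_mul_sin ha (by positivity)]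
  · simp only [Function.comp_apply]
    push_cast
    rw [← mul_assoc (2 * π) (n : ℝ), log_mul ha hN.ne']
    field_simp
    ring
  · rw [show 2 * π * n * ((N + 1 : ℕ) : ℝ) = (n * (N + 1) : ℕ) * (2 * π) by push_cast; ring,
      cos_nat_mul_two_pi]

/-- The cosine Fourier coefficients of `log Γ` on the unit interval. -/
theorem integral_log_Gamma_mul_cos {n : ℕ} (hn : 0 < n) :
    ∫ x in (0:ℝ)..1, log (Gamma x) * cos (2 * π * n * x) = 1 / (4 * n) := by
  have hn' : (0 : ℝ) < n := by exact_mod_cast hn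
  have ha : 2 * π * n ≠ 0 := by positivity
  have hs : sin (2 * π * n) = 0 := by
    rw [show 2 * π * n = (2 * n : ℕ) * π by push_cast; ring, sin_nat_mul_pi]
  have hc : cos (2 * π * n) = 1 := by rw [mul_comm, cos_nat_mul_two_pi]
  have hlim := tendsto_sub_integral_log_mul (g := fun x ↦ cos (2 * π * n * x)) (by fun_prop)
    (fun x ↦ by simp only [mul_add, mul_one]; rw [cos_add, hs, hc]; ring)
    (by rw [integral_cos_mul ha, mul_one, hs]; simp) fun x ↦ abs_cos_le_one _
  refine tendsto_nhds_unique hlim ?_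
  have h1 := (tendsto_integral_sinc.comp (tendsto_mul_add_one_atTop hn)).div_const (2 * π * n)
  rw [show π / 2 / (2 * π * n) = 1 / (4 * n) by field_simp; ring] at h1
  refine h1.congr fun N ↦ ?_
  rw [integral_id_mul_cos ha hs hc, integral_log_mul_cos ha (by positivity)]
  · simp only [Function.comp_apply]
    push_cast
    rw [← mul_assoc (2 * π) (n : ℝ)]
    field_simp
    ring
  · rw [show 2 * π * n * ((N + 1 : ℕ) : ℝ) = (2 * (n * (N + 1)) : ℕ) * π by push_cast; ring,
      sin_nat_mul_pi]

/-- Raabe's integral. -/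
theorem integral_log_Gamma : ∫ x in (0:ℝ)..1, log (Gamma x) = log (2 * π) / 2 := by
  have hrefl : ∫ x in (0:ℝ)..1, log (Gamma (1 - x)) = ∫ x in (0:ℝ)..1, log (Gamma x) := by
    rw [intervalIntegral.integral_comp_sub_left (fun x ↦ log (Gamma x)) 1]
    simp
  have hi : IntervalIntegrable (fun x ↦ log (Gamma (1 - x))) volume 0 1 := by
    have := (intervalIntegrable_log_Gamma.comp_sub_left 1).symm
    simpa using this
  have hlogsin : IntervalIntegrable (fun x ↦ log (sin (π * x))) volume 0 1 := by
    have := intervalIntegrable_log_sin (a := 0) (b := π)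
    have h := this.comp_mul_left (c := π)
    simpa [pi_ne_zero] using h
  have hsin : ∫ x in (0:ℝ)..1, log (sin (π * x)) = -log 2 := by
    rw [intervalIntegral.integral_comp_mul_left (fun x ↦ log (sin x)) pi_ne_zero]
    rw [mul_zero, mul_one, integral_log_sin_zero_pi, smul_eq_mul]
    field_simp
  have hsum : (∫ x in (0:ℝ)..1, log (Gamma x)) + ∫ x in (0:ℝ)..1, log (Gamma (1 - x)) =
      ∫ x in (0:ℝ)..1, (log π - log (sin (π * x))) := by
    rw [← intervalIntegral.integral_add intervalIntegrable_log_Gamma hi]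
    refine intervalIntegral.integral_congr_ae ?_
    filter_upwards [compl_mem_ae_iff.2 (measure_singleton (1 : ℝ))] with x hx1 hx
    rw [uIoc_of_le zero_le_one] at hx
    have hlt : x < 1 := lt_of_le_of_ne hx.2 hx1
    have hs : 0 < sin (π * x) :=
      sin_pos_of_pos_of_lt_pi (mul_pos pi_pos hx.1) (by nlinarith [pi_pos])
    rw [← log_mul (Gamma_pos_of_pos hx.1).ne' (Gamma_pos_of_pos (by linarith)).ne',
      Gamma_mul_Gamma_one_sub, log_div pi_ne_zero hs.ne']
  rw [hrefl, intervalIntegral.integral_sub (by simp) hlogsin, hsin] at hsum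
  simp at hsum
  rw [log_mul two_ne_zero pi_ne_zero]
  linarith

theorem summable_one_div_one_add_sq :
    Summable fun n : ℕ ↦ 1 / (1 + 4 * ((n : ℝ) + 1) ^ 2 * π ^ 2) := by
  refine Summable.of_nonneg_of_le (fun n ↦ by positivity) (fun n ↦ ?_) summable_one_div_add_one_sq
  refine one_div_le_one_div_of_le (by positivity) ?_
  nlinarith [pi_gt_three, sq_nonneg ((n : ℝ) + 1), mul_nonneg (sq_nonneg ((n : ℝ) + 1))
    (by nlinarith [pi_gt_three] : 0 ≤ π ^ 2 - 1)]

theorem cot_I_div_two :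
    Complex.cot (Complex.I / 2) = ((-(cosh (1 / 2) / sinh (1 / 2)) : ℝ) : ℂ) * Complex.I := by
  have hs : Complex.sinh (1 / 2) ≠ 0 := by
    have : sinh (1 / 2) ≠ 0 := (sinh_pos_iff.2 (by norm_num)).ne'
    rw [← Complex.ofReal_ne_zero] at this
    simpa using this
  rw [Complex.cot, show Complex.I / 2 = (1 / 2) * Complex.I by ring, Complex.cos_mul_I,
    Complex.sin_mul_I]
  push_cast
  field_simp
  rw [Complex.I_sq]
  ring

theorem hasSum_one_div_one_add_sq :
    HasSum (fun n : ℕ ↦ 1 / (1 + 4 * ((n : ℝ) + 1) ^ 2 * π ^ 2))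
      ((cosh (1 / 2) / sinh (1 / 2) - 2) / 4) := by
  have hx : Complex.I / (2 * π) ∈ Complex.integerComplement := by
    rintro ⟨n, hn⟩
    have := congrArg Complex.im hn
    rw [show Complex.I / (2 * π) = ((1 / (2 * π) : ℝ) : ℂ) * Complex.I by push_cast; ring,
      Complex.im_ofReal_mul] at this
    simp [pi_ne_zero] at this
  have hπ : (π : ℂ) ≠ 0 := Complex.ofReal_ne_zero.2 pi_ne_zero
  have h := cot_series_rep' hx
  rw [show (π : ℂ) * (Complex.I / (2 * π)) = Complex.I / 2 by field_simp, cot_I_div_two] at h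
  have hterm (n : ℕ) : 1 / (Complex.I / (2 * π) - (n + 1)) + 1 / (Complex.I / (2 * π) + (n + 1)) =
      ((1 / (1 + 4 * ((n : ℝ) + 1) ^ 2 * π ^ 2) : ℝ) : ℂ) * (-4 * π * Complex.I) := by
    have hd : (1 + 4 * ((n : ℝ) + 1) ^ 2 * π ^ 2 : ℂ) ≠ 0 := by
      have : (1 + 4 * ((n : ℝ) + 1) ^ 2 * π ^ 2 : ℝ) ≠ 0 := by positivity
      exact_mod_cast this
    have hf : (1 + 4 * ((n : ℝ) + 1) ^ 2 * π ^ 2 : ℂ) =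
        -((Complex.I - 2 * π * (n + 1)) * (Complex.I + 2 * π * (n + 1))) := by
      push_cast
      linear_combination Complex.I_sq
    rw [hf] at hd
    have h1 : Complex.I - 2 * π * (n + 1) ≠ 0 := fun h ↦ hd (by rw [h]; ring)
    have h2 : Complex.I + 2 * π * (n + 1) ≠ 0 := fun h ↦ hd (by rw [h]; ring)
    rw [show Complex.I / (2 * π) - (n + 1) = (Complex.I - 2 * π * (n + 1)) / (2 * π) by field_simp,
      show Complex.I / (2 * π) + (n + 1) = (Complex.I + 2 * π * (n + 1)) / (2 * π) by field_simp]
    push_cast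
    push_cast at hf
    rw [hf]
    field_simp
    ring
  simp only [hterm] at h
  rw [tsum_mul_right, ← Complex.ofReal_tsum] at h
  have him := congrArg Complex.im h
  rw [show (1 : ℂ) / (Complex.I / (2 * π)) = ((-(2 * π) : ℝ) : ℂ) * Complex.I by
      field_simp; push_cast; linear_combination (2 * (π : ℂ)) * Complex.I_sq, ← mul_assoc,
    ← sub_mul, ← mul_assoc, ← Complex.ofReal_mul, ← Complex.ofReal_sub,
    show ((-4 : ℂ) * π) = ((-4 * π : ℝ) : ℂ) by push_cast; ring, ← Complex.ofReal_mul,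
    Complex.im_ofReal_mul, Complex.im_ofReal_mul, Complex.I_im, mul_one, mul_one] at him
  convert! summable_one_div_one_add_sq.hasSum using 1
  have : π * (4 * ∑' n : ℕ, 1 / (1 + 4 * ((n : ℝ) + 1) ^ 2 * π ^ 2)) =
    π * (cosh (1 / 2) / sinh (1 / 2) - 2) := by linarith
  linarith [mul_left_cancel₀ pi_ne_zero this]

theorem hasSum_one_div_mul_one_add_sq :
    HasSum (fun n : ℕ ↦ 1 / (((n : ℝ) + 1) * (1 + 4 * ((n : ℝ) + 1) ^ 2 * π ^ 2)))
      ((digamma (Complex.I / (2 * π))).re + eulerMascheroniConstant) := by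
  have h := hasSum_re_digamma_mul_I (y := 1 / (2 * π)) (by positivity) (by
    rw [abs_of_pos (by positivity)]
    exact one_div_lt_one_div_of_lt two_pos (by linarith [pi_gt_three]))
  rw [show ((1 / (2 * π) : ℝ) : ℂ) * Complex.I = Complex.I / (2 * π) by push_cast; ring] at h
  refine h.congr_fun fun n ↦ ?_
  field_simp
  ring

theorem fourierCoeffOn_ofReal {f : ℝ → ℝ} (hf : IntervalIntegrable f volume 0 1) (n : ℤ) :
    fourierCoeffOn zero_lt_one (fun x ↦ (f x : ℂ)) n =
      (∫ x in (0:ℝ)..1, f x * cos (2 * π * n * x) : ℝ) -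
        (∫ x in (0:ℝ)..1, f x * sin (2 * π * n * x) : ℝ) * Complex.I := by
  rw [fourierCoeffOn_eq_integral, ← intervalIntegral.integral_ofReal,
    ← intervalIntegral.integral_ofReal, ← intervalIntegral.integral_mul_const,
    ← intervalIntegral.integral_sub]
  · simp only [sub_zero, div_one, one_smul]
    congr 1
    funext x
    rw [fourier_coe_apply, smul_eq_mul,
      show 2 * π * Complex.I * ((-n : ℤ) : ℂ) * x / ((1 - 0 : ℝ) : ℂ) =
        ((-(2 * π * n * x) : ℝ) : ℂ) * Complex.I by push_cast; ring,
      Complex.exp_mul_I, ← Complex.ofReal_cos, ← Complex.ofReal_sin, cos_neg, sin_neg]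
    push_cast
    ring
  · have h : IntervalIntegrable (fun x ↦ f x * cos (2 * π * n * x)) volume 0 1 :=
      hf.mul_continuousOn (by fun_prop)
    exact ⟨h.1.ofReal, h.2.ofReal⟩
  · have h : IntervalIntegrable (fun x ↦ f x * sin (2 * π * n * x)) volume 0 1 :=
      hf.mul_continuousOn (by fun_prop)
    exact IntervalIntegrable.mul_const ⟨h.1.ofReal, h.2.ofReal⟩ _

theorem hasSum_sq_integral_mul_cos_add {f : ℝ → ℝ}
    (hf : MemLp f 2 (volume.restrict (Ioc 0 1))) :
    HasSum (fun n : ℤ ↦ (∫ x in (0:ℝ)..1, f x * cos (2 * π * n * x)) ^ 2 +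
      (∫ x in (0:ℝ)..1, f x * sin (2 * π * n * x)) ^ 2) (∫ x in (0:ℝ)..1, f x ^ 2) := by
  have hi : IntervalIntegrable f volume 0 1 :=
    (intervalIntegrable_iff_integrableOn_Ioc_of_le zero_le_one).2 (hf.integrable one_le_two)
  have h := hasSum_sq_fourierCoeffOn zero_lt_one (f := fun x ↦ (f x : ℂ)) hf.ofReal
  simp only [fourierCoeffOn_ofReal hi, sub_zero, inv_one, one_smul, Complex.norm_real,
    norm_eq_abs, sq_abs] at h
  refine h.congr_fun ?_
  intro n
  rw [← Complex.normSq_eq_norm_sq, Complex.normSq_apply]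
  simp
  ring

theorem intervalIntegral_mul_eq_of_memLp {f g : ℝ → ℝ}
    (hf : MemLp f 2 (volume.restrict (Ioc 0 1))) (hg : MemLp g 2 (volume.restrict (Ioc 0 1))) :
    ∫ x in (0:ℝ)..1, f x * g x =
      ((∫ x in (0:ℝ)..1, (f + g) x ^ 2) - ∫ x in (0:ℝ)..1, (f - g) x ^ 2) / 4 := by
  have h1 := (hf.add hg).integrable_sq
  have h2 := (hf.sub hg).integrable_sq
  rw [← intervalIntegral.integral_sub
    ((intervalIntegrable_iff_integrableOn_Ioc_of_le zero_le_one).2 h1)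
    ((intervalIntegrable_iff_integrableOn_Ioc_of_le zero_le_one).2 h2),
    ← intervalIntegral.integral_div]
  congr 1
  funext x
  simp only [Pi.add_apply, Pi.sub_apply]
  ring

/-- Parseval's identity for the trigonometric system on the unit interval. -/
theorem hasSum_int_integral_mul {f g : ℝ → ℝ}
    (hf : MemLp f 2 (volume.restrict (Ioc 0 1))) (hg : MemLp g 2 (volume.restrict (Ioc 0 1))) :
    HasSum (fun n : ℤ ↦
      (∫ x in (0:ℝ)..1, f x * cos (2 * π * n * x)) * (∫ x in (0:ℝ)..1, g x * cos (2 * π * n * x)) +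
      (∫ x in (0:ℝ)..1, f x * sin (2 * π * n * x)) * ∫ x in (0:ℝ)..1, g x * sin (2 * π * n * x))
      (∫ x in (0:ℝ)..1, f x * g x) := by
  have hfi : IntervalIntegrable f volume 0 1 :=
    (intervalIntegrable_iff_integrableOn_Ioc_of_le zero_le_one).2 (hf.integrable one_le_two)
  have hgi : IntervalIntegrable g volume 0 1 :=
    (intervalIntegrable_iff_integrableOn_Ioc_of_le zero_le_one).2 (hg.integrable one_le_two)
  have hadd {h : ℝ → ℝ} (hh : Continuous h) : ∫ x in (0:ℝ)..1, (f + g) x * h x =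
      (∫ x in (0:ℝ)..1, f x * h x) + ∫ x in (0:ℝ)..1, g x * h x := by
    rw [← intervalIntegral.integral_add (hfi.mul_continuousOn hh.continuousOn)
      (hgi.mul_continuousOn hh.continuousOn)]
    simp only [Pi.add_apply, add_mul]
  have hsub {h : ℝ → ℝ} (hh : Continuous h) : ∫ x in (0:ℝ)..1, (f - g) x * h x =
      (∫ x in (0:ℝ)..1, f x * h x) - ∫ x in (0:ℝ)..1, g x * h x := by
    rw [← intervalIntegral.integral_sub (hfi.mul_continuousOn hh.continuousOn)
      (hgi.mul_continuousOn hh.continuousOn)]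
    simp only [Pi.sub_apply, sub_mul]
  rw [intervalIntegral_mul_eq_of_memLp hf hg]
  refine (((hasSum_sq_integral_mul_cos_add (hf.add hg)).sub
    (hasSum_sq_integral_mul_cos_add (hf.sub hg))).div_const 4).congr_fun fun n ↦ ?_
  rw [hadd (h := fun x ↦ cos (2 * π * n * x)) (by fun_prop),
    hadd (h := fun x ↦ sin (2 * π * n * x)) (by fun_prop),
    hsub (h := fun x ↦ cos (2 * π * n * x)) (by fun_prop),
    hsub (h := fun x ↦ sin (2 * π * n * x)) (by fun_prop)]
  ring

/-- Parseval's identity for the trigonometric system on the unit interval, summed over the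
positive frequencies. -/
theorem hasSum_nat_integral_mul {f g : ℝ → ℝ}
    (hf : MemLp f 2 (volume.restrict (Ioc 0 1))) (hg : MemLp g 2 (volume.restrict (Ioc 0 1))) :
    HasSum (fun n : ℕ ↦ 2 *
      ((∫ x in (0:ℝ)..1, f x * cos (2 * π * (n + 1 : ℕ) * x)) *
        (∫ x in (0:ℝ)..1, g x * cos (2 * π * (n + 1 : ℕ) * x)) +
      (∫ x in (0:ℝ)..1, f x * sin (2 * π * (n + 1 : ℕ) * x)) *
        ∫ x in (0:ℝ)..1, g x * sin (2 * π * (n + 1 : ℕ) * x)))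
      ((∫ x in (0:ℝ)..1, f x * g x) - (∫ x in (0:ℝ)..1, f x) * ∫ x in (0:ℝ)..1, g x) := by
  have h := (hasSum_nat_add_iff' 1).2 (hasSum_int_integral_mul hf hg).nat_add_neg
  simp only [Finset.range_one, Finset.sum_singleton, Nat.cast_zero, Int.cast_zero,
    Int.cast_neg, Int.cast_natCast, mul_zero, zero_mul, cos_zero, sin_zero, mul_one,
    intervalIntegral.integral_zero, add_zero, mul_neg, neg_mul, cos_neg, sin_neg,
    intervalIntegral.integral_neg, neg_neg] at h
  convert! h using 1
  · funext n
    ring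
  · ring

theorem memLp_log : MemLp log 2 (volume.restrict (Ioc 0 1)) := by
  rw [memLp_two_iff_integrable_sq measurable_log.aestronglyMeasurable]
  have h : IntegrableOn (fun x : ℝ ↦ 16 * x ^ (-(1 / 2) : ℝ)) (Ioc 0 1) :=
    (intervalIntegrable_iff_integrableOn_Ioc_of_le zero_le_one).1
      ((intervalIntegral.intervalIntegrable_rpow' (by norm_num)).const_mul 16)
  refine h.mono' (measurable_log.pow_const 2).aestronglyMeasurable ?_
  filter_upwards [ae_restrict_mem measurableSet_Ioc] with x hx
  have h1 := (abs_log_mul_self_rpow_lt x (1 / 4) hx.1 hx.2 (by norm_num)).le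
  have hp : 0 < x ^ (1 / 4 : ℝ) := rpow_pos_of_pos hx.1 _
  have h2 : (log x * x ^ (1 / 4 : ℝ)) ^ 2 ≤ 16 := by
    rw [← sq_abs]
    nlinarith [abs_nonneg (log x * x ^ (1 / 4 : ℝ))]
  have h3 : (x ^ (1 / 4 : ℝ)) ^ 2 = x ^ (1 / 2 : ℝ) := by
    rw [← rpow_natCast, ← rpow_mul hx.1.le]
    norm_num
  rw [norm_of_nonneg (sq_nonneg _), rpow_neg hx.1.le, ← div_eq_mul_inv, ← h3,
    le_div_iff₀ (by positivity), ← mul_pow]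
  exact h2

theorem memLp_two_of_continuousOn {f : ℝ → ℝ} (hf : ContinuousOn f (Icc 0 1)) :
    MemLp f 2 (volume.restrict (Ioc 0 1)) :=
  ((memLp_two_iff_integrable_sq (hf.aestronglyMeasurable measurableSet_Icc)).2
    ((hf.pow 2).integrableOn_compact isCompact_Icc)).mono_measure
      (Measure.restrict_mono Ioc_subset_Icc_self le_rfl)

theorem memLp_log_Gamma : MemLp (fun x ↦ log (Gamma x)) 2 (volume.restrict (Ioc 0 1)) := by
  have h : MemLp (fun x ↦ log (Gamma (x + 1))) 2 (volume.restrict (Ioc 0 1)) :=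
    memLp_two_of_continuousOn continuousOn_log_Gamma_add_one
  refine (h.sub memLp_log).ae_eq ?_
  filter_upwards [ae_restrict_mem measurableSet_Ioc] with x hx
  have := log_Gamma_add_one hx.1
  simp only [Function.comp_apply] at this
  simp [this]

theorem memLp_exp : MemLp exp 2 (volume.restrict (Ioc 0 1)) :=
  memLp_two_of_continuousOn continuous_exp.continuousOn

theorem integral_exp_mul_cos {a : ℝ} (hs : sin a = 0) (hc : cos a = 1) :
    ∫ x in (0:ℝ)..1, exp x * cos (a * x) = (exp 1 - 1) / (1 + a ^ 2) := by
  have ha : 1 + a ^ 2 ≠ 0 := by positivity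
  rw [intervalIntegral.integral_eq_sub_of_hasDerivAt
    (f := fun x ↦ exp x * (cos (a * x) + a * sin (a * x)) / (1 + a ^ 2)) (fun x _ ↦ ?_)
    (Continuous.intervalIntegrable (by fun_prop) _ _)]
  · simp [hs, hc]
    ring
  · have h1 : HasDerivAt (fun t ↦ a * t) a x := by
      simpa using (hasDerivAt_id x).const_mul a
    refine (((hasDerivAt_exp x).mul (h1.cos.add (h1.sin.const_mul a))).div_const
      (1 + a ^ 2)).congr_deriv ?_
    simp only [Pi.add_apply]
    field_simp
    ring

theorem integral_exp_mul_sin {a : ℝ} (hs : sin a = 0) (hc : cos a = 1) :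
    ∫ x in (0:ℝ)..1, exp x * sin (a * x) = -((exp 1 - 1) * a / (1 + a ^ 2)) := by
  have ha : 1 + a ^ 2 ≠ 0 := by positivity
  rw [intervalIntegral.integral_eq_sub_of_hasDerivAt
    (f := fun x ↦ exp x * (sin (a * x) - a * cos (a * x)) / (1 + a ^ 2)) (fun x _ ↦ ?_)
    (Continuous.intervalIntegrable (by fun_prop) _ _)]
  · simp [hs, hc]
    ring
  · have h1 : HasDerivAt (fun t ↦ a * t) a x := by
      simpa using (hasDerivAt_id x).const_mul a
    refine (((hasDerivAt_exp x).mul (h1.sin.sub (h1.cos.const_mul a))).div_const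
      (1 + a ^ 2)).congr_deriv ?_
    simp only [Pi.sub_apply]
    field_simp
    ring

/-- Parseval's identity for `exp` and `log Γ` on the unit interval. -/
theorem hasSum_exp_mul_log_Gamma :
    HasSum (fun n : ℕ ↦ 1 / (((n : ℝ) + 1) * (1 + 4 * ((n : ℝ) + 1) ^ 2 * π ^ 2)) -
        4 * (log (2 * π) + eulerMascheroniConstant) *
          (1 / (1 + 4 * ((n : ℝ) + 1) ^ 2 * π ^ 2)) -
        4 * (log (n + 1) / (1 + 4 * ((n : ℝ) + 1) ^ 2 * π ^ 2)))
      ((2 / (exp 1 - 1)) * (∫ x in (0:ℝ)..1, exp x * log (Gamma x)) - log (2 * π)) := by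
  have he : exp 1 - 1 ≠ 0 := by linarith [add_one_lt_exp (one_ne_zero (α := ℝ))]
  have h := (hasSum_nat_integral_mul memLp_exp memLp_log_Gamma).mul_left (2 / (exp 1 - 1))
  rw [integral_exp, exp_zero, integral_log_Gamma, mul_sub,
    show 2 / (exp 1 - 1) * ((exp 1 - 1) * (log (2 * π) / 2)) = log (2 * π) by field_simp] at h
  refine h.congr_fun fun n ↦ ?_
  have hs : sin (2 * π * (n + 1 : ℕ)) = 0 := by
    rw [show 2 * π * (n + 1 : ℕ) = (2 * (n + 1) : ℕ) * π by push_cast; ring, sin_nat_mul_pi]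
  have hc : cos (2 * π * (n + 1 : ℕ)) = 1 := by rw [mul_comm, cos_nat_mul_two_pi]
  rw [integral_exp_mul_cos hs hc, integral_exp_mul_sin hs hc,
    integral_log_Gamma_mul_cos n.succ_pos, integral_log_Gamma_mul_sin n.succ_pos,
    log_mul (x := 2 * π) (y := (n + 1 : ℕ)) (by positivity) (by positivity)]
  push_cast
  rw [show 1 + 4 * ((n : ℝ) + 1) ^ 2 * π ^ 2 = 1 + (2 * π * (n + 1)) ^ 2 by ring]
  have hd : 1 + (2 * π * ((n : ℝ) + 1)) ^ 2 ≠ 0 := by positivity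
  have hn : (n : ℝ) + 1 ≠ 0 := by positivity
  generalize 1 + (2 * π * ((n : ℝ) + 1)) ^ 2 = d at hd
  field_simp
  ring

/-- `(2/(e − 1))·∫₀¹ eˣ·log Γ(x) dx
      = C·(3 − coth(1/2)) + Re ψ(i/(2π)) − 4·∑_{n=1}^∞ (log n)/(1 + 4n²π²)`,
where `C = log(2π) + γ`, `ψ = Γ′/Γ` is the digamma function, and `coth` is the
hyperbolic cotangent. -/
theorem integral_exp_mul_log_Gamma :
    (2 / (Real.exp 1 - 1)) * ∫ x in (0:ℝ)..1, Real.exp x * Real.log (Real.Gamma x) =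
      (Real.log (2 * π) + Real.eulerMascheroniConstant) *
          (3 - Real.cosh (1 / 2) / Real.sinh (1 / 2))
        + (digamma (Complex.I / (2 * π))).re
        - 4 * ∑' n : ℕ, Real.log (n + 1) / (1 + 4 * ((n : ℝ) + 1) ^ 2 * π ^ 2) := by
  have hA := hasSum_one_div_mul_one_add_sq
  have hB := hasSum_one_div_one_add_sq.mul_left (4 * (log (2 * π) + eulerMascheroniConstant))
  have hL := ((hA.sub hB).sub hasSum_exp_mul_log_Gamma).div_const 4
  have hL' := (hL.congr_fun (g := fun n : ℕ ↦
    log (n + 1) / (1 + 4 * ((n : ℝ) + 1) ^ 2 * π ^ 2)) fun n ↦ by ring).tsum_eq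
  rw [hL']
  ring
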